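/- Let L be a language over a finite alphabet Σ and let a, b ∈ ℕ with a ≤ b. Assume every word of L has length at least a. Then the substring language {Ss(σ,a,b) : σ ∈ L} equals ((Su_a(L) / Su_b(L)) ∩ Σ^{b−a}) ∪ (Su_a(L) ∩ Σ^{<b−a}), where / denotes right quotient. -/

import Mathlib

/-- The substring of `σ` between positions `a` and `b`:
the letters of `σ` at positions `a` up to `min b |σ|` (exclusive). -/
def Ss {α : Type} (σ : List α) (a b : ℕ) : List α :=
  (σ.drop a).take (b - a)

/-- The position-`i` suffix language: `Su_i(L) = {y : ∃ x, |x| = i ∧ x·y ∈ L}`. -/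
def SuAt {α : Type} (L : Language α) (i : ℕ) : Set (List α) :=
  {y | ∃ x : List α, x.length = i ∧ x ++ y ∈ L}

/-- Right quotient: `L₁ / L₂ = {x : ∃ y ∈ L₂, x·y ∈ L₁}`. -/
def RQ {α : Type} (L₁ L₂ : Set (List α)) : Set (List α) :=
  {x | ∃ y ∈ L₂, x ++ y ∈ L₁}

/-- If every word of `L` has length at least `a` and `a ≤ b`, then the substring
language `{Ss(σ,a,b) : σ ∈ L}` equals
`((Su_a(L) / Su_b(L)) ∩ Σ^{b-a}) ∪ (Su_a(L) ∩ Σ^{<b-a})`. -/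
theorem substring_language_eq {α : Type} [Fintype α] (L : Language α) (a b : ℕ)
    (hab : a ≤ b) (hlen : ∀ σ ∈ L, a ≤ σ.length) :
    {w : List α | ∃ σ ∈ L, w = Ss σ a b} =
      (RQ (SuAt L a) (SuAt L b) ∩ {w | w.length = b - a}) ∪
        (SuAt L a ∩ {w | w.length < b - a}) := by
  ext w
  constructor
  · rintro ⟨σ, hσ, rfl⟩
    have ha := hlen σ hσ
    by_cases h : b ≤ σ.length
    · left
      refine ⟨⟨σ.drop b, ⟨σ.take b, by simp [h], by simpa using hσ⟩,
        ⟨σ.take a, by simp [ha], ?_⟩⟩, ?_⟩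
      · have h1 : σ.drop b = (σ.drop a).drop (b - a) := by
          rw [List.drop_drop]; congr 1; omega
        rw [h1, Ss, List.take_append_drop, List.take_append_drop]
        exact hσ
      · simp only [Ss, Set.mem_ofPred_eq, List.length_take, List.length_drop]
        omega
    · right
      refine ⟨⟨σ.take a, by simp [ha], ?_⟩, ?_⟩
      · have h1 : (σ.drop a).length ≤ b - a := by
          rw [List.length_drop]; omega
        rw [Ss, List.take_of_length_le h1, List.take_append_drop]
        exact hσ
      · simp only [Ss, Set.mem_ofPred_eq, List.length_take, List.length_drop]
        omega
  · rintro (⟨⟨y, _, x, hx, hL⟩, hw⟩ | ⟨⟨x, hx, hL⟩, hw⟩)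
    · refine ⟨_, hL, ?_⟩
      simp only [Set.mem_ofPred_eq] at hw
      rw [Ss, ← hx, List.drop_left, hx, ← hw, List.take_left]
    · refine ⟨_, hL, ?_⟩
      simp only [Set.mem_ofPred_eq] at hw
      rw [Ss, ← hx, List.drop_left, List.take_of_length_le (by omega)]
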